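/- Miura transformation between the lifted mKP and KP solution forms. Let p be a scattering function, and w₊, w₋ resolvent kernels for p. For x, y, t ∈ ℝ set q^x := p^x_{1,0} − p^x_{0,1}, K₊ := q^x + w₊∗q^x + q^x∗w₋ + w₊∗q^x∗w₋, K₋ := q^x + w₋∗q^x + q^x∗w₊ + w₋∗q^x∗w₊, and define the lifted mKP solution components g(x,y,t) := (w₊ − w₋)(0,0;x,y,t) and f(x,y,t) := (K₋ − K₊)(0,0;x,y,t), and the KP solution component g^{KP}(x,y,t) := w₊(0,0;x,y,t) (the kernel of G = PV solving the GLM equation P = G(id − P), as in Theorem 1). Then the Miura relation holds exactly: ∂_x g(x,y,t) + g(x,y,t)² + f(x,y,t) = 2·∂_x g^{KP}(x,y,t) for all x, y, t ∈ ℝ. -/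

import Mathlib

open MeasureTheory Filter

namespace NCKP

/-- `m × m` complex matrices. -/
abbrev Mat (m : ℕ) := Matrix (Fin m) (Fin m) ℂ

/-- Matrix-valued kernels on `ℝ²`. -/
abbrev Ker (m : ℕ) := ℝ → ℝ → Mat m

/-- Kernel product `(k₁∗k₂)(z,ζ) := ∫_{-∞}^0 k₁(z,ξ)·k₂(ξ,ζ) dξ`, entrywise Bochner integral. -/
noncomputable def conv {m : ℕ} (k₁ k₂ : Ker m) : Ker m :=
  fun z ζ => Matrix.of fun i j => ∫ ξ in Set.Iic (0:ℝ), (k₁ z ξ * k₂ ξ ζ) i j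

/-- `∂_z^a ∂_ζ^b` of a kernel, entrywise. -/
noncomputable def pder {m : ℕ} (a b : ℕ) (p : Ker m) : Ker m :=
  fun z ζ => Matrix.of fun i j =>
    iteratedDeriv a (fun z' => iteratedDeriv b (fun ζ' => p z' ζ' i j) ζ) z

/-- `p^x_{a,b}(z,ζ) := (∂_z^a ∂_ζ^b p)(z+x, ζ+x)`. -/
noncomputable def pSh {m : ℕ} (p : Ker m) (x : ℝ) (a b : ℕ) : Ker m :=
  fun z ζ => pder a b p (z + x) (ζ + x)

/-- `P̂₁ := p^x_{1,0} + p^x_{0,1}`. -/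
noncomputable def pHat1 {m : ℕ} (p : Ker m) (x : ℝ) : Ker m := pSh p x 1 0 + pSh p x 0 1

/-- `P_{[a,b]} := p^x_{a,b} − p^x_{b,a}`. -/
noncomputable def pBr {m : ℕ} (p : Ker m) (x : ℝ) (a b : ℕ) : Ker m := pSh p x a b - pSh p x b a

/-- Bounded, absolutely integrable over `(-∞,0]` in each argument, and tending to `0`
as either argument tends to `−∞` (entrywise). -/
def KernelDecay {m : ℕ} (k : Ker m) : Prop :=
  (∃ C, ∀ (z ζ : ℝ) (i j : Fin m), ‖k z ζ i j‖ ≤ C) ∧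
  (∀ (ζ : ℝ) (i j : Fin m), IntegrableOn (fun z => k z ζ i j) (Set.Iic (0:ℝ))) ∧
  (∀ (z : ℝ) (i j : Fin m), IntegrableOn (fun ζ => k z ζ i j) (Set.Iic (0:ℝ))) ∧
  (∀ (ζ : ℝ) (i j : Fin m), Tendsto (fun z => k z ζ i j) atBot (nhds 0)) ∧
  (∀ (z : ℝ) (i j : Fin m), Tendsto (fun ζ => k z ζ i j) atBot (nhds 0))

/-- A scattering function (with the `y`,`t` dependence suppressed): smooth, with all
partial derivatives bounded, integrable over `(-∞,0]` in each argument and decaying at `−∞`. -/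
def IsScattering {m : ℕ} (p : Ker m) : Prop :=
  (∀ i j : Fin m, ContDiff ℝ (⊤ : ℕ∞) (fun v : ℝ × ℝ => p v.1 v.2 i j)) ∧
  (∀ a b : ℕ, KernelDecay (pder a b p))

/-- Continuous on `(-∞,0]²`, bounded, and absolutely integrable in each argument. -/
def KernelNice {m : ℕ} (k : Ker m) : Prop :=
  (∀ i j : Fin m, ContinuousOn (fun v : ℝ × ℝ => k v.1 v.2 i j)
    (Set.Iic (0:ℝ) ×ˢ Set.Iic (0:ℝ))) ∧
  (∃ C, ∀ (z ζ : ℝ) (i j : Fin m), ‖k z ζ i j‖ ≤ C) ∧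
  (∀ (ζ : ℝ) (i j : Fin m), IntegrableOn (fun z => k z ζ i j) (Set.Iic (0:ℝ))) ∧
  (∀ (z : ℝ) (i j : Fin m), IntegrableOn (fun ζ => k z ζ i j) (Set.Iic (0:ℝ)))

/-- Entrywise iterated derivative in the parameter `x` of an `x`-family of kernels. -/
noncomputable def xder {m : ℕ} (n : ℕ) (w : ℝ → Ker m) : ℝ → Ker m :=
  fun x z ζ => Matrix.of fun i j => iteratedDeriv n (fun x' => w x' z ζ i j) x

/-- `w x` is the kernel of `V − id`, `V := (id − P)⁻¹`, with parameter `x`: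
a smooth family of kernels, whose partial derivatives are all bounded, integrable
and decaying, solving the resolvent equations `w = p^x + p^x∗w = p^x + w∗p^x`. -/
def IsResolventPlus {m : ℕ} (p : Ker m) (w : ℝ → Ker m) : Prop :=
  (∀ i j : Fin m, ContDiff ℝ (⊤ : ℕ∞) (fun v : ℝ × ℝ × ℝ => w v.1 v.2.1 v.2.2 i j)) ∧
  (∀ (n a b : ℕ) (x : ℝ), KernelDecay (pder a b (xder n w x))) ∧
  (∀ x, w x = pSh p x 0 0 + conv (pSh p x 0 0) (w x)) ∧
  (∀ x, w x = pSh p x 0 0 + conv (w x) (pSh p x 0 0))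

/-- `w x` is the kernel of `V† − id`, `V† := (id + P)⁻¹`, with parameter `x`:
it solves `w = −p^x − p^x∗w = −p^x − w∗p^x`. -/
def IsResolventMinus {m : ℕ} (p : Ker m) (w : ℝ → Ker m) : Prop :=
  (∀ i j : Fin m, ContDiff ℝ (⊤ : ℕ∞) (fun v : ℝ × ℝ × ℝ => w v.1 v.2.1 v.2.2 i j)) ∧
  (∀ (n a b : ℕ) (x : ℝ), KernelDecay (pder a b (xder n w x))) ∧
  (∀ x, w x = -(pSh p x 0 0) - conv (pSh p x 0 0) (w x)) ∧
  (∀ x, w x = -(pSh p x 0 0) - conv (w x) (pSh p x 0 0))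

/-- Kernel of the word `A·V'` where `V' = δ + v`. -/
noncomputable def aV {m : ℕ} (A v : Ker m) : Ker m := A + conv A v

/-- Kernel of the word `V·A` where `V = δ + u`. -/
noncomputable def vA {m : ℕ} (u A : Ker m) : Ker m := A + conv u A

/-- Kernel of the word `V A V'` where `V = δ+u`, `V' = δ+v`. -/
noncomputable def vAv {m : ℕ} (u A v : Ker m) : Ker m := vA u (aV A v)

/-- Kernel of the word `V A V' B V''` where `V = δ+u`, `V' = δ+v`, `V'' = δ+w'`. -/
noncomputable def vAvBv {m : ℕ} (u A v B w' : Ker m) : Ker m := vAv u (conv (aV A v) B) w'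

/-- Entrywise `∂_x` of an `x`-family of kernels. -/
noncomputable def dxK {m : ℕ} (E : ℝ → Ker m) (x : ℝ) : Ker m :=
  fun z ζ => Matrix.of fun i j => deriv (fun x' => E x' z ζ i j) x

end NCKP

namespace NCKP

/-- Matrix-valued functions `p = p(z,ζ;y,t)` on ℝ⁴. -/
abbrev Ker4 (m : ℕ) := ℝ → ℝ → ℝ → ℝ → Mat m

/-- `∂_z^a ∂_ζ^b` of a four-variable kernel, entrywise. -/
noncomputable def pder4 {m : ℕ} (a b : ℕ) (p : Ker4 m) : Ker4 m :=
  fun z ζ y t => Matrix.of fun i j =>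
    iteratedDeriv a (fun z' => iteratedDeriv b (fun ζ' => p z' ζ' y t i j) ζ) z

/-- A scattering function `p = p(z,ζ;y,t)`: smooth, with all its partial derivatives
bounded, absolutely integrable over `(-∞,0]` in each of the first two arguments, and
tending to `0` as either of the first two arguments tends to `−∞`. -/
def IsScattering4 {m : ℕ} (p : Ker4 m) : Prop :=
  (∀ i j : Fin m, ContDiff ℝ (⊤ : ℕ∞)
    (fun v : ℝ × ℝ × ℝ × ℝ => p v.1 v.2.1 v.2.2.1 v.2.2.2 i j)) ∧
  (∀ (a b : ℕ) (y t : ℝ), KernelDecay (fun z ζ => pder4 a b p z ζ y t))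

/-- The linearised KP constraints `∂_y p = ∂_z²p − ∂_ζ²p` and
`∂_t p = 4(∂_z³p + ∂_ζ³p)`, entrywise. -/
def LinearisedKP {m : ℕ} (p : Ker4 m) : Prop :=
  (∀ (z ζ y t : ℝ) (i j : Fin m),
    deriv (fun y' => p z ζ y' t i j) y
      = (pder4 2 0 p z ζ y t - pder4 0 2 p z ζ y t) i j) ∧
  (∀ (z ζ y t : ℝ) (i j : Fin m),
    deriv (fun t' => p z ζ y t' i j) t
      = (4:ℂ) * ((pder4 3 0 p z ζ y t + pder4 0 3 p z ζ y t) i j))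

/-- `∂_x^c ∂_y^d ∂_t^e` of a matrix-valued function of `(x,y,t)`, entrywise. -/
noncomputable def D3 {m : ℕ} (c d e : ℕ) (u : ℝ → ℝ → ℝ → Mat m) : ℝ → ℝ → ℝ → Mat m :=
  fun x y t => Matrix.of fun i j =>
    iteratedDeriv c (fun x' =>
      iteratedDeriv d (fun y' =>
        iteratedDeriv e (fun t' => u x' y' t' i j) t) y) x

/-- `∂_z^a ∂_ζ^b ∂_x^c ∂_y^d ∂_t^e` of a matrix function of `(z,ζ,x,y,t)`, entrywise. -/
noncomputable def D5 {m : ℕ} (a b c d e : ℕ)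
    (g : ℝ → ℝ → ℝ → ℝ → ℝ → Mat m) : ℝ → ℝ → ℝ → ℝ → ℝ → Mat m :=
  fun z ζ x y t => Matrix.of fun i j =>
    iteratedDeriv a (fun z' =>
      iteratedDeriv b (fun ζ' =>
        iteratedDeriv c (fun x' =>
          iteratedDeriv d (fun y' =>
            iteratedDeriv e (fun t' => g z' ζ' x' y' t' i j) t) y) x) ζ) z

/-- The kernel `p^x_{0,0}(z,ζ) = p(z+x,ζ+x;y,t)` at fixed parameters `x,y,t`. -/
noncomputable def pXK {m : ℕ} (p : Ker4 m) (x y t : ℝ) : Ker m :=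
  fun z ζ => p (z + x) (ζ + x) y t

/-- `w = w(z,ζ;x,y,t)` is the kernel of `V − id`, `V := (id − P)⁻¹`: a smooth family
of kernels, all of whose partial derivatives are bounded, integrable and decaying at
`−∞` in `z` and `ζ`, solving `w = p^x + p^x∗w = p^x + w∗p^x`. -/
def IsResolvent4Plus {m : ℕ} (p : Ker4 m) (w : ℝ → ℝ → ℝ → ℝ → ℝ → Mat m) : Prop :=
  (∀ i j : Fin m, ContDiff ℝ (⊤ : ℕ∞)
    (fun v : ℝ × ℝ × ℝ × ℝ × ℝ => w v.1 v.2.1 v.2.2.1 v.2.2.2.1 v.2.2.2.2 i j)) ∧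
  (∀ (a b c d e : ℕ) (x y t : ℝ), KernelDecay (fun z ζ => D5 a b c d e w z ζ x y t)) ∧
  (∀ x y t : ℝ, (fun z ζ => w z ζ x y t)
      = pXK p x y t + conv (pXK p x y t) (fun z ζ => w z ζ x y t)) ∧
  (∀ x y t : ℝ, (fun z ζ => w z ζ x y t)
      = pXK p x y t + conv (fun z ζ => w z ζ x y t) (pXK p x y t))

/-- `w = w(z,ζ;x,y,t)` is the kernel of `V† − id`, `V† := (id + P)⁻¹`:
it solves `w = −p^x − p^x∗w = −p^x − w∗p^x`. -/
def IsResolvent4Minus {m : ℕ} (p : Ker4 m) (w : ℝ → ℝ → ℝ → ℝ → ℝ → Mat m) : Prop :=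
  (∀ i j : Fin m, ContDiff ℝ (⊤ : ℕ∞)
    (fun v : ℝ × ℝ × ℝ × ℝ × ℝ => w v.1 v.2.1 v.2.2.1 v.2.2.2.1 v.2.2.2.2 i j)) ∧
  (∀ (a b c d e : ℕ) (x y t : ℝ), KernelDecay (fun z ζ => D5 a b c d e w z ζ x y t)) ∧
  (∀ x y t : ℝ, (fun z ζ => w z ζ x y t)
      = -(pXK p x y t) - conv (pXK p x y t) (fun z ζ => w z ζ x y t)) ∧
  (∀ x y t : ℝ, (fun z ζ => w z ζ x y t)
      = -(pXK p x y t) - conv (fun z ζ => w z ζ x y t) (pXK p x y t))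

/-- The kernel `q^x := p^x_{1,0} − p^x_{0,1}` at fixed parameters `x,y,t`. -/
noncomputable def qXK {m : ℕ} (p : Ker4 m) (x y t : ℝ) : Ker m :=
  fun z ζ => pder4 1 0 p (z + x) (ζ + x) y t - pder4 0 1 p (z + x) (ζ + x) y t

/-- `K₊ := q^x + w₊∗q^x + q^x∗w₋ + w₊∗q^x∗w₋`, the kernel of `V P_{[1,0]} V†`. -/
noncomputable def Kplus {m : ℕ} (p : Ker4 m) (wp wm : ℝ → ℝ → ℝ → ℝ → ℝ → Mat m)
    (x y t : ℝ) : Ker m :=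
  qXK p x y t + conv (fun z ζ => wp z ζ x y t) (qXK p x y t)
    + conv (qXK p x y t) (fun z ζ => wm z ζ x y t)
    + conv (fun z ζ => wp z ζ x y t) (conv (qXK p x y t) (fun z ζ => wm z ζ x y t))

/-- `K₋ := q^x + w₋∗q^x + q^x∗w₊ + w₋∗q^x∗w₊`, the kernel of `V† P_{[1,0]} V`. -/
noncomputable def Kminus {m : ℕ} (p : Ker4 m) (wp wm : ℝ → ℝ → ℝ → ℝ → ℝ → Mat m)
    (x y t : ℝ) : Ker m :=
  qXK p x y t + conv (fun z ζ => wm z ζ x y t) (qXK p x y t)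
    + conv (qXK p x y t) (fun z ζ => wp z ζ x y t)
    + conv (fun z ζ => wm z ζ x y t) (conv (qXK p x y t) (fun z ζ => wp z ζ x y t))

end NCKP

namespace NCKP

section Core

set_option linter.unusedSectionVars false

variable {E : Type*} [NormedRing E] [NormedAlgebra ℝ E] [CompleteSpace E]

/-- Associativity (Fubini) for `a ∗ Q ∗ b` with `Q` bounded continuous. -/
lemma fubini_core (S T : Set ℝ) (a b : ℝ → E) (Q : ℝ → ℝ → E) (C : ℝ)
    (ha : IntegrableOn a S) (hb : IntegrableOn b T)
    (hQ : Continuous (fun v : ℝ × ℝ => Q v.1 v.2)) (hC : ∀ z w, ‖Q z w‖ ≤ C) :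
    IntegrableOn (fun ξ => a ξ * ∫ η in T, Q ξ η * b η) S ∧
    IntegrableOn (fun η => (∫ ξ in S, a ξ * Q ξ η) * b η) T ∧
    (∫ ξ in S, a ξ * ∫ η in T, Q ξ η * b η) = ∫ η in T, (∫ ξ in S, a ξ * Q ξ η) * b η := by
  have hQ1 : ∀ ξ, Continuous (fun η => Q ξ η) := fun ξ => by fun_prop
  have hQ2 : ∀ η, Continuous (fun ξ => Q ξ η) := fun η => by fun_prop
  have hi1 : ∀ ξ, IntegrableOn (fun η => Q ξ η * b η) T := fun ξ =>
    Integrable.bdd_mul hb (hQ1 ξ).aestronglyMeasurable (ae_of_all _ (hC ξ))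
  have hi2 : ∀ η, IntegrableOn (fun ξ => a ξ * Q ξ η) S := fun η =>
    Integrable.mul_bdd ha (hQ2 η).aestronglyMeasurable (ae_of_all _ (fun ξ => hC ξ η))
  have hprod : Integrable (Function.uncurry fun ξ η => a ξ * Q ξ η * b η)
      ((volume.restrict S).prod (volume.restrict T)) := by
    have hn : Integrable (fun v : ℝ × ℝ => ‖a v.1‖ * (C * ‖b v.2‖))
        ((volume.restrict S).prod (volume.restrict T)) :=
      Integrable.mul_prod ha.norm (hb.norm.const_mul C)
    refine hn.mono' ?_ (ae_of_all _ ?_)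
    · exact (ha.aestronglyMeasurable.comp_fst.mul hQ.aestronglyMeasurable).mul
        hb.aestronglyMeasurable.comp_snd
    · rintro ⟨ξ, η⟩
      calc ‖a ξ * Q ξ η * b η‖ ≤ ‖a ξ‖ * ‖Q ξ η‖ * ‖b η‖ :=
            (norm_mul_le _ _).trans (by gcongr; exact norm_mul_le _ _)
        _ ≤ ‖a ξ‖ * C * ‖b η‖ := by gcongr; exact hC ξ η
        _ = _ := by ring
  have e1 : ∀ ξ, a ξ * ∫ η in T, Q ξ η * b η = ∫ η in T, a ξ * Q ξ η * b η := fun ξ => by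
    rw [← integral_const_mul_of_integrable (hi1 ξ)]
    simp only [mul_assoc]
  have e2 : ∀ η, (∫ ξ in S, a ξ * Q ξ η) * b η = ∫ ξ in S, a ξ * Q ξ η * b η := fun η => by
    rw [← integral_mul_const_of_integrable (hi2 η)]
  simp only [e1, e2]
  exact ⟨hprod.integral_prod_left, hprod.integral_prod_right, integral_integral_swap hprod⟩

/-- The boundary identity for `V† [∂, P] V` at the corner `(0,0)`. -/
lemma corner_core (P Pz Pw : ℝ → ℝ → E) (a b : ℝ → E) (C : ℝ)
    (hPc : Continuous (fun v : ℝ × ℝ => P v.1 v.2))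
    (hPzc : Continuous (fun v : ℝ × ℝ => Pz v.1 v.2))
    (hPwc : Continuous (fun v : ℝ × ℝ => Pw v.1 v.2))
    (hC : ∀ z w, ‖P z w‖ ≤ C) (hCz : ∀ z w, ‖Pz z w‖ ≤ C) (hCw : ∀ z w, ‖Pw z w‖ ≤ C)
    (hPz : ∀ z w, HasDerivAt (fun z' => P z' w) (Pz z w) z)
    (hPw : ∀ z w, HasDerivAt (fun w' => P z w') (Pw z w) w)
    (ha : IntegrableOn a (Set.Iic 0)) (hb : IntegrableOn b (Set.Iic 0))
    (ha0 : Tendsto a atBot (nhds 0)) (hb0 : Tendsto b atBot (nhds 0))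
    (hae : ∀ w, a w = -P 0 w - ∫ ξ in Set.Iic (0:ℝ), a ξ * P ξ w)
    (hbe : ∀ z, b z = P z 0 + ∫ ξ in Set.Iic (0:ℝ), P z ξ * b ξ) :
    (Pz 0 0 - Pw 0 0) + (∫ ξ in Set.Iic (0:ℝ), a ξ * (Pz ξ 0 - Pw ξ 0))
      + (∫ ξ in Set.Iic (0:ℝ), (Pz 0 ξ - Pw 0 ξ) * b ξ)
      + (∫ ξ in Set.Iic (0:ℝ), a ξ * ∫ η in Set.Iic (0:ℝ), (Pz ξ η - Pw ξ η) * b η)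
      = deriv b 0 + deriv a 0 + a 0 * b 0 := by
  have hb' : ∀ z, HasDerivAt b (Pz z 0 + ∫ ξ in Set.Iic (0:ℝ), Pz z ξ * b ξ) z := by
    intro z
    have h := (hasDerivAt_integral_of_dominated_loc_of_deriv_le
      (μ := volume.restrict (Set.Iic (0:ℝ))) (F := fun z ξ => P z ξ * b ξ)
      (F' := fun z ξ => Pz z ξ * b ξ) (x₀ := z) (s := Set.univ)
      (bound := fun ξ => C * ‖b ξ‖) univ_mem
      (Eventually.of_forall fun z => ((by fun_prop : Continuous fun ξ => P z ξ).aestronglyMeasurable).mul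
        hb.aestronglyMeasurable)
      (Integrable.bdd_mul hb (by fun_prop : Continuous fun ξ => P z ξ).aestronglyMeasurable
        (ae_of_all _ (hC z)))
      (((by fun_prop : Continuous fun ξ => Pz z ξ).aestronglyMeasurable).mul
        hb.aestronglyMeasurable)
      (ae_of_all _ fun ξ z _ => (norm_mul_le _ _).trans (by gcongr; exact hCz z ξ))
      (hb.norm.const_mul C)
      (ae_of_all _ fun ξ z _ => (hPz z ξ).mul_const (b ξ))).2
    have := (hPz z 0).add h
    exact this.congr_of_eventuallyEq (Eventually.of_forall hbe)
  have ha' : ∀ w, HasDerivAt a (-Pw 0 w - ∫ ξ in Set.Iic (0:ℝ), a ξ * Pw ξ w) w := by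
    intro w
    have h := (hasDerivAt_integral_of_dominated_loc_of_deriv_le
      (μ := volume.restrict (Set.Iic (0:ℝ))) (F := fun w ξ => a ξ * P ξ w)
      (F' := fun w ξ => a ξ * Pw ξ w) (x₀ := w) (s := Set.univ)
      (bound := fun ξ => ‖a ξ‖ * C) univ_mem
      (Eventually.of_forall fun w => ha.aestronglyMeasurable.mul
        ((by fun_prop : Continuous fun ξ => P ξ w).aestronglyMeasurable))
      (Integrable.mul_bdd ha (by fun_prop : Continuous fun ξ => P ξ w).aestronglyMeasurable
        (ae_of_all _ (fun ξ => hC ξ w)))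
      (ha.aestronglyMeasurable.mul
        ((by fun_prop : Continuous fun ξ => Pw ξ w).aestronglyMeasurable))
      (ae_of_all _ fun ξ w _ => (norm_mul_le _ _).trans (by gcongr; exact hCw ξ w))
      (ha.norm.mul_const C)
      (ae_of_all _ fun ξ w _ => (hPw ξ w).const_mul (a ξ))).2
    have := (hPw 0 w).neg.sub h
    exact this.congr_of_eventuallyEq (Eventually.of_forall hae)
  have hda : ∀ w, ∫ ξ in Set.Iic (0:ℝ), a ξ * Pw ξ w = -deriv a w - Pw 0 w := fun w => by
    rw [(ha' w).deriv]; abel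
  have hdb : ∀ z, ∫ ξ in Set.Iic (0:ℝ), Pz z ξ * b ξ = deriv b z - Pz z 0 := fun z => by
    rw [(hb' z).deriv]; abel
  have i1 : ∀ z, IntegrableOn (fun η => Pz z η * b η) (Set.Iic 0) := fun z =>
    Integrable.bdd_mul hb (by fun_prop : Continuous fun ξ => Pz z ξ).aestronglyMeasurable
        (ae_of_all _ (hCz z))
  have i2 : ∀ z, IntegrableOn (fun η => Pw z η * b η) (Set.Iic 0) := fun z =>
    Integrable.bdd_mul hb (by fun_prop : Continuous fun ξ => Pw z ξ).aestronglyMeasurable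
        (ae_of_all _ (hCw z))
  have i3 : ∀ w, IntegrableOn (fun ξ => a ξ * Pz ξ w) (Set.Iic 0) := fun w =>
    Integrable.mul_bdd ha (by fun_prop : Continuous fun ξ => Pz ξ w).aestronglyMeasurable
        (ae_of_all _ (fun ξ => hCz ξ w))
  have i4 : ∀ w, IntegrableOn (fun ξ => a ξ * Pw ξ w) (Set.Iic 0) := fun w =>
    Integrable.mul_bdd ha (by fun_prop : Continuous fun ξ => Pw ξ w).aestronglyMeasurable
        (ae_of_all _ (fun ξ => hCw ξ w))
  obtain ⟨f1, -, -⟩ := fubini_core (Set.Iic 0) (Set.Iic 0) a b Pz C ha hb hPzc hCz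
  obtain ⟨g1, g2, g3⟩ := fubini_core (Set.Iic 0) (Set.Iic 0) a b Pw C ha hb hPwc hCw
  have s1 : ∀ ξ, ∫ η in Set.Iic (0:ℝ), (Pz ξ η - Pw ξ η) * b η
      = (∫ η in Set.Iic (0:ℝ), Pz ξ η * b η) - ∫ η in Set.Iic (0:ℝ), Pw ξ η * b η := fun ξ => by
    rw [← integral_sub (i1 ξ) (i2 ξ)]; simp only [sub_mul]
  have s2 : ∫ ξ in Set.Iic (0:ℝ), a ξ * (Pz ξ 0 - Pw ξ 0)
      = (∫ ξ in Set.Iic (0:ℝ), a ξ * Pz ξ 0) - ∫ ξ in Set.Iic (0:ℝ), a ξ * Pw ξ 0 := by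
    rw [← integral_sub (i3 0) (i4 0)]; simp only [mul_sub]
  have j1 : IntegrableOn (fun ξ => a ξ * deriv b ξ) (Set.Iic 0) := by
    refine (f1.add (i3 0)).congr (ae_of_all _ fun ξ => ?_)
    simp only [Pi.add_apply, hdb, mul_sub, sub_add_cancel]
  have k1 : IntegrableOn (fun ξ => Pw 0 ξ * b ξ) (Set.Iic 0) := i2 0
  have j2 : IntegrableOn (fun ξ => deriv a ξ * b ξ) (Set.Iic 0) := by
    refine (g2.add k1).neg.congr (ae_of_all _ fun ξ => ?_)
    simp only [Pi.add_apply, Pi.neg_apply, hda, sub_mul, neg_mul]; abel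
  have s3 : (∫ ξ in Set.Iic (0:ℝ), a ξ * ∫ η in Set.Iic (0:ℝ), (Pz ξ η - Pw ξ η) * b η)
      = (∫ ξ in Set.Iic (0:ℝ), a ξ * deriv b ξ) - (∫ ξ in Set.Iic (0:ℝ), a ξ * Pz ξ 0)
        + (∫ ξ in Set.Iic (0:ℝ), deriv a ξ * b ξ) + (∫ ξ in Set.Iic (0:ℝ), Pw 0 ξ * b ξ) := by
    simp only [s1, mul_sub]
    rw [integral_sub f1 g1, g3]
    simp only [hda, hdb, mul_sub, sub_mul, neg_mul]
    rw [integral_sub j1 (i3 0), integral_sub (f := fun ξ => -(deriv a ξ * b ξ)) j2.neg k1,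
      integral_neg]
    abel
  have ftc : (∫ ξ in Set.Iic (0:ℝ), (deriv a ξ * b ξ + a ξ * deriv b ξ)) = a 0 * b 0 - 0 := by
    refine integral_Iic_of_hasDerivAt_of_tendsto (f := fun ξ => a ξ * b ξ) ?_ ?_ (j2.add j1) ?_
    · exact ((ha' 0).continuousAt.mul (hb' 0).continuousAt).continuousWithinAt
    · intro x _
      exact (ha' x).differentiableAt.hasDerivAt.mul (hb' x).differentiableAt.hasDerivAt
    · simpa using ha0.mul hb0
  rw [integral_add j2 j1, sub_zero] at ftc
  rw [s1 0, s2, s3, hda 0, hdb 0, ← ftc]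
  abel

/-- The same identity with the roles of the signs exchanged. -/
lemma corner_core_neg (P Pz Pw : ℝ → ℝ → E) (a b : ℝ → E) (C : ℝ)
    (hPc : Continuous (fun v : ℝ × ℝ => P v.1 v.2))
    (hPzc : Continuous (fun v : ℝ × ℝ => Pz v.1 v.2))
    (hPwc : Continuous (fun v : ℝ × ℝ => Pw v.1 v.2))
    (hC : ∀ z w, ‖P z w‖ ≤ C) (hCz : ∀ z w, ‖Pz z w‖ ≤ C) (hCw : ∀ z w, ‖Pw z w‖ ≤ C)
    (hPz : ∀ z w, HasDerivAt (fun z' => P z' w) (Pz z w) z)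
    (hPw : ∀ z w, HasDerivAt (fun w' => P z w') (Pw z w) w)
    (ha : IntegrableOn a (Set.Iic 0)) (hb : IntegrableOn b (Set.Iic 0))
    (ha0 : Tendsto a atBot (nhds 0)) (hb0 : Tendsto b atBot (nhds 0))
    (hae : ∀ w, a w = P 0 w + ∫ ξ in Set.Iic (0:ℝ), a ξ * P ξ w)
    (hbe : ∀ z, b z = -P z 0 - ∫ ξ in Set.Iic (0:ℝ), P z ξ * b ξ) :
    (Pz 0 0 - Pw 0 0) + (∫ ξ in Set.Iic (0:ℝ), a ξ * (Pz ξ 0 - Pw ξ 0))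
      + (∫ ξ in Set.Iic (0:ℝ), (Pz 0 ξ - Pw 0 ξ) * b ξ)
      + (∫ ξ in Set.Iic (0:ℝ), a ξ * ∫ η in Set.Iic (0:ℝ), (Pz ξ η - Pw ξ η) * b η)
      = -(deriv b 0 + deriv a 0 + a 0 * b 0) := by
  rw [← corner_core (fun z w => -P z w) (fun z w => -Pz z w) (fun z w => -Pw z w) a b C
    hPc.neg hPzc.neg hPwc.neg (by simpa using hC) (by simpa using hCz) (by simpa using hCw)
    (fun z w => (hPz z w).fun_neg) (fun z w => (hPw z w).fun_neg) ha hb ha0 hb0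
    (fun w => by rw [hae w]; simp [integral_neg]) (fun z => by
      rw [hbe z]; simp [integral_neg, sub_eq_add_neg])]
  have e : ∀ u v : E, -u - -v = -(u - v) := fun u v => by abel
  simp only [e, mul_neg, neg_mul, integral_neg]
  abel

/-- Finite-increment resolvent identity. -/
lemma resolvent_increment (P : ℝ → ℝ → E) (α β : ℝ → E) (C h : ℝ) (hh : 0 ≤ h)
    (hPc : Continuous (fun v : ℝ × ℝ => P v.1 v.2)) (hC : ∀ z w, ‖P z w‖ ≤ C)
    (hα : IntegrableOn α (Set.Iic h)) (hβ : IntegrableOn β (Set.Iic 0))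
    (hαe : ∀ w, α w = P 0 w + ∫ ξ in Set.Iic h, α ξ * P ξ w)
    (hβe : ∀ z, β z = P z 0 + ∫ ξ in Set.Iic (0:ℝ), P z ξ * β ξ) :
    α 0 - β 0 = ∫ ξ in (0:ℝ)..h, α ξ * β ξ := by
  obtain ⟨f1, f2, f3⟩ := fubini_core (Set.Iic h) (Set.Iic 0) α β P C hα hβ hPc hC
  have i1 : IntegrableOn (fun ξ => α ξ * P ξ 0) (Set.Iic h) :=
    Integrable.mul_bdd hα (by fun_prop : Continuous fun ξ => P ξ 0).aestronglyMeasurable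
        (ae_of_all _ (fun ξ => hC ξ 0))
  have i2 : IntegrableOn (fun ξ => P 0 ξ * β ξ) (Set.Iic 0) :=
    Integrable.bdd_mul hβ (by fun_prop : Continuous fun ξ => P 0 ξ).aestronglyMeasurable
        (ae_of_all _ (hC 0))
  have eα : ∀ w, ∫ ξ in Set.Iic h, α ξ * P ξ w = α w - P 0 w := fun w => by
    rw [eq_sub_iff_add_eq', ← hαe]
  have eβ : ∀ z, ∫ ξ in Set.Iic (0:ℝ), P z ξ * β ξ = β z - P z 0 := fun w => by
    rw [eq_sub_iff_add_eq', ← hβe]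
  simp only [eα, eβ] at f1 f2 f3
  have j1 : IntegrableOn (fun ξ => α ξ * β ξ) (Set.Iic h) := by
    refine (f1.add i1).congr (ae_of_all _ fun ξ => ?_)
    simp only [Pi.add_apply, mul_sub, sub_add_cancel]
  have j2 : IntegrableOn (fun ξ => α ξ * β ξ) (Set.Iic 0) :=
    j1.mono_set (Set.Iic_subset_Iic.2 hh)
  simp only [mul_sub, sub_mul] at f3
  rw [integral_sub j1 i1, integral_sub j2 i2, eα, eβ] at f3
  rw [← intervalIntegral.integral_Iic_sub_Iic j2 j1, sub_eq_iff_eq_add.1 f3]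
  abel

/-- Derivative from the increment formula. -/
lemma deriv_of_increment (F : ℝ → E) (F' : E) (G : ℝ → ℝ → E)
    (hF : HasDerivAt F F' 0) (hG : Continuous (fun v : ℝ × ℝ => G v.1 v.2))
    (hinc : ∀ h, 0 ≤ h → F h - F 0 = ∫ ξ in (0:ℝ)..h, G h ξ) : F' = G 0 0 := by
  have h2 : HasDerivWithinAt F (G 0 0) (Set.Ici 0) 0 := by
    rw [hasDerivWithinAt_iff_isLittleO, Asymptotics.isLittleO_iff]
    intro ε hε
    have hc := Metric.continuousAt_iff.1 (hG.continuousAt (x := ((0:ℝ), (0:ℝ)))) ε hε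
    obtain ⟨δ, hδ, hd⟩ := hc
    filter_upwards [self_mem_nhdsWithin, nhdsWithin_le_nhds (Metric.ball_mem_nhds (0:ℝ) hδ)]
      with h hh0 hhδ
    have hh : 0 ≤ h := hh0
    have hhδ' : |h| < δ := by simpa using hhδ
    rw [abs_of_nonneg hh] at hhδ'
    have e : F h - F 0 - (h - 0) • G 0 0 = ∫ ξ in (0:ℝ)..h, (G h ξ - G 0 0) := by
      rw [intervalIntegral.integral_sub, hinc h hh, intervalIntegral.integral_const]
      · exact (by fun_prop : Continuous fun ξ => G h ξ).intervalIntegrable _ _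
      · exact intervalIntegrable_const
    rw [e]
    refine intervalIntegral.norm_integral_le_of_norm_le_const (fun ξ hξ => ?_)
    rw [Set.uIoc_of_le hh] at hξ
    have := hd (x := (h, ξ)) (by
      rw [Prod.dist_eq]
      simp only [Real.dist_eq, sub_zero]
      rw [abs_of_nonneg hh, abs_of_nonneg hξ.1.le]
      exact max_lt hhδ' (hξ.2.trans_lt hhδ'))
    rw [dist_eq_norm] at this
    exact this.le
  exact (uniqueDiffWithinAt_Ici 0).eq_deriv _ hF.hasDerivWithinAt h2

/-- `∂_x w = ∂_z w + ∂_ζ w + w·w` at the corner. -/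
lemma resolvent_deriv (p : ℝ → ℝ → E) (w : ℝ → ℝ → ℝ → E) (C : ℝ)
    (hpc : Continuous (fun v : ℝ × ℝ => p v.1 v.2)) (hC : ∀ z w, ‖p z w‖ ≤ C)
    (hw : ContDiff ℝ 1 (fun v : ℝ × ℝ × ℝ => w v.1 v.2.1 v.2.2))
    (hi1 : ∀ ζ x, IntegrableOn (fun z => w z ζ x) (Set.Iic 0))
    (hi2 : ∀ z x, IntegrableOn (fun ζ => w z ζ x) (Set.Iic 0))
    (he1 : ∀ x z ζ, w z ζ x = p (z + x) (ζ + x)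
      + ∫ ξ in Set.Iic (0:ℝ), p (z + x) (ξ + x) * w ξ ζ x)
    (he2 : ∀ x z ζ, w z ζ x = p (z + x) (ζ + x)
      + ∫ ξ in Set.Iic (0:ℝ), w z ξ x * p (ξ + x) (ζ + x)) (x : ℝ) :
    deriv (fun x' => w 0 0 x') x
      = deriv (fun z => w z 0 x) 0 + deriv (fun ζ => w 0 ζ x) 0 + w 0 0 x * w 0 0 x := by
  have hwc := hw.continuous
  have hd : HasFDerivAt (fun v : ℝ × ℝ × ℝ => w v.1 v.2.1 v.2.2)
      (fderiv ℝ (fun v : ℝ × ℝ × ℝ => w v.1 v.2.1 v.2.2) (0, 0, x)) (0, 0, x) :=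
    ((hw.differentiable one_ne_zero) _).hasFDerivAt
  set L := fderiv ℝ (fun v : ℝ × ℝ × ℝ => w v.1 v.2.1 v.2.2) (0, 0, x)
  have dz : HasDerivAt (fun z => w z 0 x) (L (1, 0, 0)) 0 :=
    HasFDerivAt.comp_hasDerivAt (f := fun z : ℝ => (z, (0:ℝ), x)) (0:ℝ) hd
      ((hasDerivAt_id (0:ℝ)).prodMk (hasDerivAt_const _ _))
  have dζ : HasDerivAt (fun ζ => w 0 ζ x) (L (0, 1, 0)) 0 :=
    HasFDerivAt.comp_hasDerivAt (f := fun ζ : ℝ => ((0:ℝ), ζ, x)) (0:ℝ) hd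
      ((hasDerivAt_const _ _).prodMk ((hasDerivAt_id (0:ℝ)).prodMk (hasDerivAt_const _ _)))
  have dx : HasDerivAt (fun x' => w 0 0 x') (L (0, 0, 1)) x :=
    HasFDerivAt.comp_hasDerivAt (f := fun x' : ℝ => ((0:ℝ), (0:ℝ), x')) x hd
      ((hasDerivAt_const _ _).prodMk ((hasDerivAt_const _ _).prodMk (hasDerivAt_id x)))
  have dF : HasDerivAt (fun h : ℝ => w (-h) (-h) (x + h)) (L (-1, -1, 1)) 0 := by
    have hd' : HasFDerivAt (fun v : ℝ × ℝ × ℝ => w v.1 v.2.1 v.2.2) L (-0, -0, x + 0) := by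
      simpa using hd
    exact HasFDerivAt.comp_hasDerivAt (f := fun h : ℝ => (-h, -h, x + h)) (0:ℝ) hd'
      ((hasDerivAt_id (0:ℝ)).neg.prodMk ((hasDerivAt_id (0:ℝ)).neg.prodMk
        ((hasDerivAt_id (0:ℝ)).const_add x)))
  have key := deriv_of_increment (fun h : ℝ => w (-h) (-h) (x + h)) _
    (fun h ξ => w (-h) (ξ - h) (x + h) * w ξ 0 x) dF
    (by
      refine Continuous.mul ?_ ?_
      · exact hwc.comp (f := fun v : ℝ × ℝ => (-v.1, v.2 - v.1, x + v.1)) (by fun_prop)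
      · exact hwc.comp (f := fun v : ℝ × ℝ => (v.2, (0:ℝ), x)) (by fun_prop))
    (by
      intro h hh
      have shift : ∀ f : ℝ → E, ∫ ξ in Set.Iic h, f (ξ - h) = ∫ ξ in Set.Iic (0:ℝ), f ξ := by
        intro f
        have := (measurePreserving_sub_right (volume : Measure ℝ) h).setIntegral_preimage_emb
          (MeasurableEquiv.subRight h).measurableEmbedding f (Set.Iic 0)
        rw [← this]
        simp
      have r := resolvent_increment (fun z ζ => p (z + x) (ζ + x))
        (fun ξ => w (-h) (ξ - h) (x + h)) (fun ξ => w ξ 0 x) C h hh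
        (hpc.comp (f := fun v : ℝ × ℝ => (v.1 + x, v.2 + x)) (by fun_prop))
        (fun _ _ => hC _ _)
        (by
          have := (measurePreserving_sub_right (volume : Measure ℝ) h).integrableOn_comp_preimage
            (MeasurableEquiv.subRight h).measurableEmbedding (s := Set.Iic 0)
            (f := fun ξ => w (-h) ξ (x + h))
          have h2 := this.2 (hi2 _ _)
          simpa [Function.comp_def] using h2)
        (hi1 0 x)
        (by
          intro ζ
          have s := shift (fun ξ => w (-h) ξ (x + h) * p (ξ + (x + h)) (ζ + x))
          have e := he2 (x + h) (-h) (ζ - h)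
          simp only [show -h + (x + h) = 0 + x by ring,
            show ζ - h + (x + h) = ζ + x by ring] at e
          rw [e, ← s]
          congr 2
          funext ξ
          simp only [show ξ - h + (x + h) = ξ + x by ring])
        (by intro z; exact he1 x z 0)
      simp only [zero_sub] at r
      simpa using r)
  have hsum : L (-1, -1, 1) = L (0, 0, 1) - L (1, 0, 0) - L (0, 1, 0) := by
    rw [← map_sub, ← map_sub]; congr 1; simp
  rw [dz.deriv, dζ.deriv, dx.deriv]
  rw [hsum] at key
  simp only [neg_zero, sub_zero, add_zero] at key
  rw [← key]; abel

/-- Matrix-free form of the Miura identity. -/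
theorem miura_core (p Pz Pw : ℝ → ℝ → E) (wp wm : ℝ → ℝ → ℝ → E) (C : ℝ)
    (hpc : Continuous (fun v : ℝ × ℝ => p v.1 v.2))
    (hPzc : Continuous (fun v : ℝ × ℝ => Pz v.1 v.2))
    (hPwc : Continuous (fun v : ℝ × ℝ => Pw v.1 v.2))
    (hC : ∀ z w, ‖p z w‖ ≤ C) (hCz : ∀ z w, ‖Pz z w‖ ≤ C) (hCw : ∀ z w, ‖Pw z w‖ ≤ C)
    (hPz : ∀ z w, HasDerivAt (fun z' => p z' w) (Pz z w) z)
    (hPw : ∀ z w, HasDerivAt (fun w' => p z w') (Pw z w) w)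
    (hwp : ContDiff ℝ 1 (fun v : ℝ × ℝ × ℝ => wp v.1 v.2.1 v.2.2))
    (hip1 : ∀ ζ x, IntegrableOn (fun z => wp z ζ x) (Set.Iic 0))
    (hip2 : ∀ z x, IntegrableOn (fun ζ => wp z ζ x) (Set.Iic 0))
    (htp1 : ∀ ζ x, Tendsto (fun z => wp z ζ x) atBot (nhds 0))
    (htp2 : ∀ z x, Tendsto (fun ζ => wp z ζ x) atBot (nhds 0))
    (hep1 : ∀ x z ζ, wp z ζ x = p (z + x) (ζ + x)
      + ∫ ξ in Set.Iic (0:ℝ), p (z + x) (ξ + x) * wp ξ ζ x)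
    (hep2 : ∀ x z ζ, wp z ζ x = p (z + x) (ζ + x)
      + ∫ ξ in Set.Iic (0:ℝ), wp z ξ x * p (ξ + x) (ζ + x))
    (hwm : ContDiff ℝ 1 (fun v : ℝ × ℝ × ℝ => wm v.1 v.2.1 v.2.2))
    (him1 : ∀ ζ x, IntegrableOn (fun z => wm z ζ x) (Set.Iic 0))
    (him2 : ∀ z x, IntegrableOn (fun ζ => wm z ζ x) (Set.Iic 0))
    (htm1 : ∀ ζ x, Tendsto (fun z => wm z ζ x) atBot (nhds 0))
    (htm2 : ∀ z x, Tendsto (fun ζ => wm z ζ x) atBot (nhds 0))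
    (hem1 : ∀ x z ζ, wm z ζ x = -p (z + x) (ζ + x)
      - ∫ ξ in Set.Iic (0:ℝ), p (z + x) (ξ + x) * wm ξ ζ x)
    (hem2 : ∀ x z ζ, wm z ζ x = -p (z + x) (ζ + x)
      - ∫ ξ in Set.Iic (0:ℝ), wm z ξ x * p (ξ + x) (ζ + x)) (x : ℝ)
    (q : ℝ → ℝ → E) (hq : ∀ z ζ, q z ζ = Pz (z + x) (ζ + x) - Pw (z + x) (ζ + x)) :
    deriv (fun x' => wp 0 0 x') x + deriv (fun x' => wm 0 0 x') x
      = (wp 0 0 x - wm 0 0 x) * (wp 0 0 x - wm 0 0 x)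
        + ((q 0 0 + (∫ ξ in Set.Iic (0:ℝ), wm 0 ξ x * q ξ 0)
            + (∫ ξ in Set.Iic (0:ℝ), q 0 ξ * wp ξ 0 x)
            + (∫ ξ in Set.Iic (0:ℝ), wm 0 ξ x * ∫ η in Set.Iic (0:ℝ), q ξ η * wp η 0 x))
          - (q 0 0 + (∫ ξ in Set.Iic (0:ℝ), wp 0 ξ x * q ξ 0)
            + (∫ ξ in Set.Iic (0:ℝ), q 0 ξ * wm ξ 0 x)
            + (∫ ξ in Set.Iic (0:ℝ), wp 0 ξ x * ∫ η in Set.Iic (0:ℝ), q ξ η * wm η 0 x))) := by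
  have dp := resolvent_deriv p wp C hpc hC hwp hip1 hip2 hep1 hep2 x
  have dm := resolvent_deriv (fun z w => -p z w) wm C hpc.neg (by simpa using hC) hwm him1 him2
    (fun x z ζ => by rw [hem1 x z ζ]; simp [integral_neg, sub_eq_add_neg])
    (fun x z ζ => by rw [hem2 x z ζ]; simp [integral_neg, sub_eq_add_neg]) x
  have sh : ∀ k : ℝ → ℝ → E, Continuous (fun v : ℝ × ℝ => k v.1 v.2) →
      Continuous (fun v : ℝ × ℝ => k (v.1 + x) (v.2 + x)) := fun k hk =>
    hk.comp (f := fun v : ℝ × ℝ => (v.1 + x, v.2 + x)) (by fun_prop)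
  have km := corner_core (fun z ζ => p (z + x) (ζ + x)) (fun z ζ => Pz (z + x) (ζ + x))
    (fun z ζ => Pw (z + x) (ζ + x)) (fun ζ => wm 0 ζ x) (fun z => wp z 0 x) C
    (sh p hpc) (sh Pz hPzc) (sh Pw hPwc) (fun _ _ => hC _ _) (fun _ _ => hCz _ _)
    (fun _ _ => hCw _ _) (fun z w => (hPz (z + x) (w + x)).comp_add_const)
    (fun z w => (hPw (z + x) (w + x)).comp_add_const)
    (him2 0 x) (hip1 0 x) (htm2 0 x) (htp1 0 x) (fun w => hem2 x 0 w) (fun z => hep1 x z 0)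
  have kp := corner_core_neg (fun z ζ => p (z + x) (ζ + x)) (fun z ζ => Pz (z + x) (ζ + x))
    (fun z ζ => Pw (z + x) (ζ + x)) (fun ζ => wp 0 ζ x) (fun z => wm z 0 x) C
    (sh p hpc) (sh Pz hPzc) (sh Pw hPwc) (fun _ _ => hC _ _) (fun _ _ => hCz _ _)
    (fun _ _ => hCw _ _) (fun z w => (hPz (z + x) (w + x)).comp_add_const)
    (fun z w => (hPw (z + x) (w + x)).comp_add_const)
    (hip2 0 x) (him1 0 x) (htp2 0 x) (htm1 0 x) (fun w => hep2 x 0 w) (fun z => hem1 x z 0)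
  simp only [← hq] at km kp
  rw [km, kp, dp, dm]
  noncomm_ring

end Core

section Transfer

attribute [local instance] Matrix.linftyOpNormedRing Matrix.linftyOpNormedAlgebra

variable {m : ℕ}

/-- The uniformity of the operator norm. -/
noncomputable abbrev matUnif (m : ℕ) : UniformSpace (Mat m) :=
  (inferInstance : PseudoMetricSpace (Mat m)).toUniformSpace

attribute [local instance] matUnif

/-- The topology of the operator norm. -/
noncomputable abbrev matTop (m : ℕ) : TopologicalSpace (Mat m) :=
  (matUnif m).toTopologicalSpace

attribute [local instance] matTop

lemma matComplete (m : ℕ) : CompleteSpace (Mat m) := FiniteDimensional.complete ℝ (Mat m)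

attribute [local instance] matComplete

/-- Embedding of an entry. -/
noncomputable def sL (i j : Fin m) : ℂ →L[ℝ] Mat m :=
  LinearMap.toContinuousLinearMap (Matrix.singleLinearMap ℝ i j)

/-- Projection to an entry. -/
noncomputable def eL (i j : Fin m) : Mat m →L[ℝ] ℂ :=
  LinearMap.toContinuousLinearMap (Matrix.entryLinearMap ℝ ℂ i j)

lemma eL_apply (i j : Fin m) (M : Mat m) : eL i j M = M i j := rfl

lemma mat_eq (M : Mat m) : M = ∑ i, ∑ j, sL i j (M i j) := Matrix.matrix_eq_sum_single M

lemma integrable_mat {μ : Measure ℝ} {f : ℝ → Mat m}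
    (h : ∀ i j, Integrable (fun x => f x i j) μ) : Integrable f μ := by
  have : f = fun x => ∑ i, ∑ j, sL i j (f x i j) := funext fun x => mat_eq (f x)
  rw [this]
  exact integrable_finsetSum _ fun i _ => integrable_finsetSum _ fun j _ =>
    (sL i j).integrable_comp (h i j)

lemma tendsto_mat {f : ℝ → Mat m}
    (h : ∀ i j, Tendsto (fun x => f x i j) atBot (nhds 0)) : Tendsto f atBot (nhds 0) := by
  have : f = fun x => ∑ i, ∑ j, sL i j (f x i j) := funext fun x => mat_eq (f x)
  rw [this]
  have h0 : (0 : Mat m) = ∑ i : Fin m, ∑ j : Fin m, sL i j 0 := by simp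
  rw [h0]
  exact tendsto_finsetSum _ fun i _ => tendsto_finsetSum _ fun j _ =>
    ((sL i j).continuous.tendsto 0).comp (h i j)

lemma contDiff_mat {V : Type*} [NormedAddCommGroup V] [NormedSpace ℝ V] {n : WithTop ℕ∞}
    {f : V → Mat m} (h : ∀ i j, ContDiff ℝ n (fun x => f x i j)) : ContDiff ℝ n f := by
  have : f = fun x => ∑ i, ∑ j, sL i j (f x i j) := funext fun x => mat_eq (f x)
  rw [this]
  exact ContDiff.sum fun i _ => ContDiff.sum fun j _ => (sL i j).contDiff.comp (h i j)

lemma bound_mat (k : Ker m) (h : ∃ C, ∀ (z ζ : ℝ) (i j : Fin m), ‖k z ζ i j‖ ≤ C) :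
    ∃ C, ∀ z ζ, ‖k z ζ‖ ≤ C := by
  obtain ⟨C, hC⟩ := h
  refine ⟨∑ i : Fin m, ∑ j : Fin m, ‖sL i j‖ * C, fun z ζ => ?_⟩
  rw [mat_eq (k z ζ)]
  refine norm_sum_le_of_le _ fun i _ => norm_sum_le_of_le _ fun j _ => ?_
  exact ((sL i j).le_opNorm _).trans (by gcongr; exact hC z ζ i j)

lemma deriv_mat {f : ℝ → Mat m} {x : ℝ} (hf : DifferentiableAt ℝ f x) :
    (Matrix.of fun i j => deriv (fun x' => f x' i j) x) = deriv f x := by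
  ext i j
  exact ((eL i j).hasFDerivAt.comp_hasDerivAt x hf.hasDerivAt).deriv

lemma conv_mat (k₁ k₂ : Ker m) (z ζ : ℝ)
    (h : IntegrableOn (fun ξ => k₁ z ξ * k₂ ξ ζ) (Set.Iic 0)) :
    conv k₁ k₂ z ζ = ∫ ξ in Set.Iic (0:ℝ), k₁ z ξ * k₂ ξ ζ := by
  ext i j
  exact (eL i j).integral_comp_comm h

lemma conv_bdd_left (k₁ k₂ : Ker m) (z ζ : ℝ) (C : ℝ)
    (hc : Continuous (fun v : ℝ × ℝ => k₁ v.1 v.2)) (hC : ∀ z ζ, ‖k₁ z ζ‖ ≤ C)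
    (h : IntegrableOn (fun ξ => k₂ ξ ζ) (Set.Iic 0)) :
    conv k₁ k₂ z ζ = ∫ ξ in Set.Iic (0:ℝ), k₁ z ξ * k₂ ξ ζ :=
  conv_mat _ _ _ _ (Integrable.bdd_mul h
    (by fun_prop : Continuous fun ξ => k₁ z ξ).aestronglyMeasurable (ae_of_all _ (hC z)))

lemma conv_bdd_right (k₁ k₂ : Ker m) (z ζ : ℝ) (C : ℝ)
    (hc : Continuous (fun v : ℝ × ℝ => k₂ v.1 v.2)) (hC : ∀ z ζ, ‖k₂ z ζ‖ ≤ C)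
    (h : IntegrableOn (fun ξ => k₁ z ξ) (Set.Iic 0)) :
    conv k₁ k₂ z ζ = ∫ ξ in Set.Iic (0:ℝ), k₁ z ξ * k₂ ξ ζ :=
  conv_mat _ _ _ _ (Integrable.mul_bdd h
    (by fun_prop : Continuous fun ξ => k₂ ξ ζ).aestronglyMeasurable
    (ae_of_all _ (fun ξ => hC ξ ζ)))

lemma conv_triple (a q b : Ker m) (C : ℝ)
    (hc : Continuous (fun v : ℝ × ℝ => q v.1 v.2)) (hC : ∀ z ζ, ‖q z ζ‖ ≤ C)
    (ha : IntegrableOn (fun ξ => a 0 ξ) (Set.Iic 0))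
    (hb : IntegrableOn (fun ξ => b ξ 0) (Set.Iic 0)) :
    (q + conv a q + conv q b + conv a (conv q b)) 0 0
      = q 0 0 + (∫ ξ in Set.Iic (0:ℝ), a 0 ξ * q ξ 0)
        + (∫ ξ in Set.Iic (0:ℝ), q 0 ξ * b ξ 0)
        + (∫ ξ in Set.Iic (0:ℝ), a 0 ξ * ∫ η in Set.Iic (0:ℝ), q ξ η * b η 0) := by
  have e : ∀ ξ, conv q b ξ 0 = ∫ η in Set.Iic (0:ℝ), q ξ η * b η 0 := fun ξ =>
    conv_bdd_left _ _ _ _ C hc hC hb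
  have f1 := (fubini_core (Set.Iic 0) (Set.Iic 0) (fun ξ => a 0 ξ) (fun ξ => b ξ 0) q C
    ha hb hc hC).1
  have e2 : conv a (conv q b) 0 0
      = ∫ ξ in Set.Iic (0:ℝ), a 0 ξ * ∫ η in Set.Iic (0:ℝ), q ξ η * b η 0 := by
    rw [conv_mat]
    · simp only [e]
    · simpa only [e] using f1
  simp only [Pi.add_apply]
  rw [e, e2, conv_bdd_right a q 0 0 C hc hC ha]

lemma miura_aux (p : Ker4 m) (hp : IsScattering4 p)
    (wp wm : ℝ → ℝ → ℝ → ℝ → ℝ → Mat m)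
    (hwp : IsResolvent4Plus p wp) (hwm : IsResolvent4Minus p wm) (x y t : ℝ) :
    (Matrix.of fun i j => deriv (fun x' => wp 0 0 x' y t i j) x)
      + (Matrix.of fun i j => deriv (fun x' => wm 0 0 x' y t i j) x)
      = (wp 0 0 x y t - wm 0 0 x y t) * (wp 0 0 x y t - wm 0 0 x y t)
        + (Kminus p wp wm x y t 0 0 - Kplus p wp wm x y t 0 0) := by
  obtain ⟨hps, hpd⟩ := hp
  obtain ⟨hwps, hwpd, hwp1, hwp2⟩ := hwp
  obtain ⟨hwms, hwmd, hwm1, hwm2⟩ := hwm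
  -- smoothness of `p`
  have hpS : ContDiff ℝ 1 (fun v : ℝ × ℝ => p v.1 v.2 y t) := contDiff_mat fun i j =>
    ((hps i j).of_le (by exact_mod_cast le_top)).comp
      (f := fun v : ℝ × ℝ => (v.1, v.2, y, t)) (by fun_prop)
  set f : ℝ × ℝ → Mat m := fun v => p v.1 v.2 y t with hf
  have hfd : ∀ v, HasFDerivAt f (fderiv ℝ f v) v := fun v =>
    ((hpS.differentiable one_ne_zero) v).hasFDerivAt
  have hdz : ∀ z ζ, HasDerivAt (fun z' => p z' ζ y t) (fderiv ℝ f (z, ζ) (1, 0)) z := fun z ζ =>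
    HasFDerivAt.comp_hasDerivAt (f := fun z' : ℝ => (z', ζ)) z (hfd (z, ζ))
      ((hasDerivAt_id z).prodMk (hasDerivAt_const _ _))
  have hdw : ∀ z ζ, HasDerivAt (fun ζ' => p z ζ' y t) (fderiv ℝ f (z, ζ) (0, 1)) ζ := fun z ζ =>
    HasFDerivAt.comp_hasDerivAt (f := fun ζ' : ℝ => (z, ζ')) ζ (hfd (z, ζ))
      ((hasDerivAt_const _ _).prodMk (hasDerivAt_id ζ))
  have e10 : ∀ z ζ, pder4 1 0 p z ζ y t = fderiv ℝ f (z, ζ) (1, 0) := fun z ζ => by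
    rw [← (hdz z ζ).deriv, ← deriv_mat (hdz z ζ).differentiableAt]
    simp [pder4, iteratedDeriv_one, iteratedDeriv_zero]
  have e01 : ∀ z ζ, pder4 0 1 p z ζ y t = fderiv ℝ f (z, ζ) (0, 1) := fun z ζ => by
    rw [← (hdw z ζ).deriv, ← deriv_mat (hdw z ζ).differentiableAt]
    simp [pder4, iteratedDeriv_one, iteratedDeriv_zero]
  have hfc := hpS.continuous_fderiv one_ne_zero
  have hPzc : Continuous (fun v : ℝ × ℝ => pder4 1 0 p v.1 v.2 y t) := by
    simp only [e10]; fun_prop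
  have hPwc : Continuous (fun v : ℝ × ℝ => pder4 0 1 p v.1 v.2 y t) := by
    simp only [e01]; fun_prop
  have hpc : Continuous (fun v : ℝ × ℝ => p v.1 v.2 y t) := hpS.continuous
  -- bounds
  obtain ⟨C0, hC0⟩ := bound_mat _ (hpd 0 0 y t).1
  obtain ⟨C1, hC1⟩ := bound_mat _ (hpd 1 0 y t).1
  obtain ⟨C2, hC2⟩ := bound_mat _ (hpd 0 1 y t).1
  have p00 : ∀ z ζ, pder4 0 0 p z ζ y t = p z ζ y t := fun z ζ => by
    ext i j; simp [pder4, iteratedDeriv_zero]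
  simp only [p00] at hC0
  set C := max C0 (max C1 C2)
  have hC : ∀ z ζ, ‖p z ζ y t‖ ≤ C := fun z ζ => (hC0 z ζ).trans (le_max_left _ _)
  have hCz : ∀ z ζ, ‖pder4 1 0 p z ζ y t‖ ≤ C := fun z ζ =>
    (hC1 z ζ).trans ((le_max_left _ _).trans (le_max_right _ _))
  have hCw : ∀ z ζ, ‖pder4 0 1 p z ζ y t‖ ≤ C := fun z ζ =>
    (hC2 z ζ).trans ((le_max_right _ _).trans (le_max_right _ _))
  -- the resolvent kernels
  have d5 : ∀ (w : ℝ → ℝ → ℝ → ℝ → ℝ → Mat m) z ζ x, D5 0 0 0 0 0 w z ζ x y t = w z ζ x y t :=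
    fun w z ζ x => by ext i j; simp [D5, iteratedDeriv_zero]
  have wfacts : ∀ w : ℝ → ℝ → ℝ → ℝ → ℝ → Mat m,
      (∀ i j : Fin m, ContDiff ℝ (⊤ : ℕ∞)
        (fun v : ℝ × ℝ × ℝ × ℝ × ℝ => w v.1 v.2.1 v.2.2.1 v.2.2.2.1 v.2.2.2.2 i j)) →
      (∀ (a b c d e : ℕ) (x y t : ℝ), KernelDecay (fun z ζ => D5 a b c d e w z ζ x y t)) →
      ContDiff ℝ 1 (fun v : ℝ × ℝ × ℝ => w v.1 v.2.1 v.2.2 y t) ∧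
      (∀ ζ x, IntegrableOn (fun z => w z ζ x y t) (Set.Iic 0)) ∧
      (∀ z x, IntegrableOn (fun ζ => w z ζ x y t) (Set.Iic 0)) ∧
      (∀ ζ x, Tendsto (fun z => w z ζ x y t) atBot (nhds 0)) ∧
      (∀ z x, Tendsto (fun ζ => w z ζ x y t) atBot (nhds 0)) := by
    intro w hs hd
    have hd0 : ∀ x, KernelDecay (fun z ζ => w z ζ x y t) := fun x => by
      have := hd 0 0 0 0 0 x y t
      simpa only [d5] using this
    refine ⟨contDiff_mat fun i j => ((hs i j).of_le (by exact_mod_cast le_top)).comp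
      (f := fun v : ℝ × ℝ × ℝ => (v.1, v.2.1, v.2.2, y, t)) (by fun_prop),
      fun ζ x => integrable_mat fun i j => (hd0 x).2.1 ζ i j,
      fun z x => integrable_mat fun i j => (hd0 x).2.2.1 z i j,
      fun ζ x => tendsto_mat fun i j => (hd0 x).2.2.2.1 ζ i j,
      fun z x => tendsto_mat fun i j => (hd0 x).2.2.2.2 z i j⟩
  obtain ⟨sp, ip1, ip2, tp1, tp2⟩ := wfacts wp hwps hwpd
  obtain ⟨sm, im1, im2, tm1, tm2⟩ := wfacts wm hwms hwmd
  have hXc : ∀ x, Continuous (fun v : ℝ × ℝ => pXK p x y t v.1 v.2) := fun x =>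
    hpc.comp (f := fun v : ℝ × ℝ => (v.1 + x, v.2 + x)) (by fun_prop)
  have hXC : ∀ x z ζ, ‖pXK p x y t z ζ‖ ≤ C := fun x z ζ => hC _ _
  have key := miura_core (fun z ζ => p z ζ y t) (fun z ζ => pder4 1 0 p z ζ y t)
    (fun z ζ => pder4 0 1 p z ζ y t) (fun z ζ x => wp z ζ x y t) (fun z ζ x => wm z ζ x y t) C
    hpc hPzc hPwc hC hCz hCw (fun z ζ => by rw [e10]; exact hdz z ζ)
    (fun z ζ => by rw [e01]; exact hdw z ζ)
    sp ip1 ip2 tp1 tp2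
    (fun x z ζ => by
      have h := congrFun (congrFun (hwp1 x y t) z) ζ
      simp only [Pi.add_apply] at h
      rw [conv_bdd_left _ (fun z ζ => wp z ζ x y t) z ζ C (hXc x) (hXC x) (ip1 ζ x)] at h
      exact h)
    (fun x z ζ => by
      have h := congrFun (congrFun (hwp2 x y t) z) ζ
      simp only [Pi.add_apply] at h
      rw [conv_bdd_right (fun z ζ => wp z ζ x y t) _ z ζ C (hXc x) (hXC x) (ip2 z x)] at h
      exact h)
    sm im1 im2 tm1 tm2
    (fun x z ζ => by
      have h := congrFun (congrFun (hwm1 x y t) z) ζ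
      simp only [Pi.sub_apply, Pi.neg_apply] at h
      rw [conv_bdd_left _ (fun z ζ => wm z ζ x y t) z ζ C (hXc x) (hXC x) (im1 ζ x)] at h
      exact h)
    (fun x z ζ => by
      have h := congrFun (congrFun (hwm2 x y t) z) ζ
      simp only [Pi.sub_apply, Pi.neg_apply] at h
      rw [conv_bdd_right (fun z ζ => wm z ζ x y t) _ z ζ C (hXc x) (hXC x) (im2 z x)] at h
      exact h)
    x (qXK p x y t) (fun z ζ => rfl)
  have hqc : Continuous (fun v : ℝ × ℝ => qXK p x y t v.1 v.2) :=
    (hPzc.sub hPwc).comp (f := fun v : ℝ × ℝ => (v.1 + x, v.2 + x)) (by fun_prop)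
  have hqC : ∀ z ζ, ‖qXK p x y t z ζ‖ ≤ C + C := fun z ζ =>
    (norm_sub_le _ _).trans (add_le_add (hCz _ _) (hCw _ _))
  have km : Kminus p wp wm x y t 0 0 = _ :=
    conv_triple (fun z ζ => wm z ζ x y t) (qXK p x y t) (fun z ζ => wp z ζ x y t) (C + C)
      hqc hqC (im2 0 x) (ip1 0 x)
  have kp : Kplus p wp wm x y t 0 0 = _ :=
    conv_triple (fun z ζ => wp z ζ x y t) (qXK p x y t) (fun z ζ => wm z ζ x y t) (C + C)
      hqc hqC (ip2 0 x) (im1 0 x)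
  have dd : ∀ w : ℝ → ℝ → ℝ → Mat m, ContDiff ℝ 1 (fun v : ℝ × ℝ × ℝ => w v.1 v.2.1 v.2.2) →
      DifferentiableAt ℝ (fun x' => w 0 0 x') x := fun w hw =>
    ((hw.differentiable one_ne_zero).comp (f := fun x' : ℝ => ((0:ℝ), (0:ℝ), x'))
      (by fun_prop)) x
  rw [km, kp, deriv_mat (f := fun x' => wp 0 0 x' y t) (dd (fun z ζ x => wp z ζ x y t) sp),
    deriv_mat (f := fun x' => wm 0 0 x' y t) (dd (fun z ζ x => wm z ζ x y t) sm)]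
  exact key

end Transfer

/-- **Miura transformation between the lifted mKP and KP solution forms.**
With the lifted mKP components `g := (w₊−w₋)(0,0;x,y,t)` and
`f := (K₋−K₊)(0,0;x,y,t)`, and the KP component `g^{KP} := w₊(0,0;x,y,t)`
(the kernel of `G = PV` solving the GLM equation `P = G(id − P)`), the Miura
relation `∂_x g + g² + f = 2 ∂_x g^{KP}` holds exactly. -/
theorem miura_transformation {m : ℕ} (p : Ker4 m) (hp : IsScattering4 p)
    (wp wm : ℝ → ℝ → ℝ → ℝ → ℝ → Mat m)
    (hwp : IsResolvent4Plus p wp) (hwm : IsResolvent4Minus p wm)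
    (g f gKP : ℝ → ℝ → ℝ → Mat m)
    (hg : ∀ x y t : ℝ, g x y t = wp 0 0 x y t - wm 0 0 x y t)
    (hf : ∀ x y t : ℝ, f x y t = Kminus p wp wm x y t 0 0 - Kplus p wp wm x y t 0 0)
    (hgKP : ∀ x y t : ℝ, gKP x y t = wp 0 0 x y t) :
    ∀ x y t : ℝ,
      D3 1 0 0 g x y t + g x y t * g x y t + f x y t
        = (2:ℕ) • D3 1 0 0 gKP x y t := by
  intro x y t
  have h := miura_aux p hp wp wm hwp hwm x y t
  have h1 : D3 1 0 0 gKP x y t = Matrix.of fun i j => deriv (fun x' => wp 0 0 x' y t i j) x := by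
    ext i j
    simp [D3, iteratedDeriv_one, iteratedDeriv_zero, hgKP]
  have dd : ∀ w : ℝ → ℝ → ℝ → ℝ → ℝ → Mat m, (∀ i j : Fin m, ContDiff ℝ (⊤ : ℕ∞)
      (fun v : ℝ × ℝ × ℝ × ℝ × ℝ => w v.1 v.2.1 v.2.2.1 v.2.2.2.1 v.2.2.2.2 i j)) → ∀ i j,
      DifferentiableAt ℝ (fun x' => w 0 0 x' y t i j) x := fun w hw i j =>
    ((((hw i j).of_le (by exact_mod_cast le_top : (1 : WithTop ℕ∞) ≤ _)).differentiable
      one_ne_zero).comp (f := fun x' : ℝ => ((0:ℝ), (0:ℝ), x', y, t)) (by fun_prop)) x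
  have h2 : D3 1 0 0 g x y t = (Matrix.of fun i j => deriv (fun x' => wp 0 0 x' y t i j) x)
      - Matrix.of fun i j => deriv (fun x' => wm 0 0 x' y t i j) x := by
    ext i j
    simp only [D3, iteratedDeriv_one, iteratedDeriv_zero, hg, Matrix.sub_apply, Matrix.of_apply]
    exact deriv_fun_sub (dd wp hwp.1 i j) (dd wm hwm.1 i j)
  rw [h1, h2, hg, hf, add_assoc, ← h, two_nsmul]
  abel

end NCKP
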